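/- The set 𝒞 of all compact connected metric spaces is path-connected as a subspace of the Gromov–Hausdorff space, and every nonempty open subset of 𝒞 (in the subspace topology) has infinite covering dimension. -/

import Mathlib

open GromovHausdorff

/-- A topological space has covering dimension at most `n` if every open cover
admits an open refinement that still covers the space and in which every point
lies in at most `n + 1` members of the refinement. -/
def CovDimLE (X : Type*) [TopologicalSpace X] (n : ℕ) : Prop :=
  ∀ U : Set (Set X), (∀ u ∈ U, IsOpen u) → ⋃₀ U = Set.univ →
    ∃ V : Set (Set X), (∀ w ∈ V, IsOpen w) ∧ ⋃₀ V = Set.univ ∧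
      (∀ w ∈ V, ∃ u ∈ U, w ⊆ u) ∧
      ∀ x : X, {w ∈ V | x ∈ w}.encard ≤ (n : ℕ∞) + 1

/-- The subset `𝒞` of the Gromov–Hausdorff space consisting of (isometry
classes of) connected compact metric spaces. -/
def GHConnected : Set GHSpace := {p | ConnectedSpace p.Rep}

/-!
Scaling a compact connected subset of `ℓ^∞` down to the origin joins its isometry class to the
one-point space.

For the dimension, attach to a compact connected space `X` two thin horns of small height `L`,
pointing in opposite directions, at two points realising the diameter. The two tips are the only
points at distance `diam X + 2 * L` from each other, and for `r < L` the points at distance `r`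
from a tip form a segment of length `h r`, the width of the horn there. Hence the profile `h` is an
isometry invariant, and letting it range over polynomials with `N` coefficients embeds the
`N`-dimensional cube into any neighbourhood of `X`. By Lebesgue's covering theorem the covering
dimension of the cube is at least `N`: its Kuhn triangulations contain an odd number of completely
labelled simplices for every Sperner labelling, since interior doors pair up and boundary doors are
the completely labelled simplices of a face.
-/

section Sperner

open Equiv

theorem even_ncard_of_involution {α : Type*} [Finite α] {s : Set α} (g : α → α)
    (hg : Set.MapsTo g s s) (hg_ne : ∀ a ∈ s, g a ≠ a) (hg_invol : ∀ a ∈ s, g (g a) = a) :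
    Even s.ncard := by
  rw [← ZMod.natCast_eq_zero_iff_even, Set.ncard_eq_toFinset_card s, Finset.card_eq_sum_ones,
    Nat.cast_sum]
  exact Finset.sum_involution (fun a _ ↦ g a) (fun _ _ ↦ by decide)
    (fun a ha _ ↦ hg_ne a (by simpa using ha)) (fun a ha ↦ by simpa using hg (by simpa using ha))
    (fun a ha ↦ hg_invol a (by simpa using ha))

theorem sum_ncard_comm {α β : Type*} [Fintype α] [Fintype β] (r : α → β → Prop) :
    ∑ a, {b | r a b}.ncard = ∑ b, {a | r a b}.ncard := by
  classical
  simp only [Set.ncard_eq_toFinset_card', Set.toFinset_ofPred]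
  exact Finset.sum_card_bipartiteAbove_eq_sum_card_bipartiteBelow r

theorem exists_castSucc_lt_and_eq_succ_imp {n : ℕ} (p : Fin n → Prop) :
    ∃ a : Fin (n + 1), (∀ i, p i → i.castSucc < a) ∧ ∀ i, a = i.succ → p i := by
  classical
  refine ⟨({i | p i} : Finset (Fin n)).sup Fin.succ, fun i hi ↦ ?_, fun i hi ↦ ?_⟩
  · exact Fin.castSucc_lt_succ.trans_le (Finset.le_sup (f := Fin.succ) (by simpa using hi))
  · have hne : Finset.Nonempty {i | p i} := by
      by_contra! hempty
      simp only [hempty, Finset.sup_empty] at hi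
      exact Fin.succ_ne_zero i hi.symm
    obtain ⟨j, hj, hsup⟩ := Finset.exists_mem_eq_sup _ hne Fin.succ
    obtain rfl : i = j := Fin.succ_injective _ (hi.symm.trans hsup)
    simpa using hj

section Doors

variable {α β : Type*} {f : α → β} {b : β} {k : α}

/-- In the language of Sperner's lemma, the facet of a simplex opposite to the vertex `k` is a
*door* for the vertex labelling `f` when its labels are exactly those different from the
distinguished label `b`. -/
def IsDoor (f : α → β) (b : β) (k : α) : Prop := f '' {k}ᶜ = {b}ᶜ

theorem isDoor_iff_of_bijective (hf : f.Bijective) : IsDoor f b k ↔ f k = b := by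
  rw [IsDoor, Set.image_compl_eq hf, Set.image_singleton, compl_inj_iff,
    Set.singleton_eq_singleton_iff]

theorem isDoor_zero_iff {n : ℕ} {f : Fin (n + 1) → β} :
    IsDoor f b 0 ↔ Set.range (f ∘ Fin.succ) = {b}ᶜ := by
  rw [IsDoor, Set.range_comp, Fin.range_succ]

theorem isDoor_last_iff {n : ℕ} {f : Fin (n + 1) → β} :
    IsDoor f b (Fin.last n) ↔ Set.range (f ∘ Fin.castSucc) = {b}ᶜ := by
  rw [IsDoor, Set.range_comp, ← Fin.succAbove_last, Fin.range_succAbove]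

variable [Finite α] [Finite β]

theorem IsDoor.injOn (hcard : Nat.card α = Nat.card β) (h : IsDoor f b k) :
    Set.InjOn f {k}ᶜ := by
  refine Set.injOn_of_ncard_image_eq ?_ (Set.toFinite _)
  rw [h, Set.ncard_compl, Set.ncard_compl, hcard, Set.ncard_singleton, Set.ncard_singleton]

theorem IsDoor.setOf_isDoor_eq (hcard : Nat.card α = Nat.card β) (h : IsDoor f b k) {k' : α}
    (hk' : k' ≠ k) (hf : f k' = f k) : {x | IsDoor f b x} = {k, k'} := by
  apply Set.Subset.antisymm
  · intro x hx
    by_contra! hne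
    simp only [Set.mem_insert_iff, Set.mem_singleton_iff, not_or] at hne
    exact hk' (hx.injOn hcard (Ne.symm hne.2) (Ne.symm hne.1) hf)
  · rintro x (rfl | rfl)
    · exact h
    · refine Eq.trans (Set.Subset.antisymm ?_ ?_) h
      · rintro _ ⟨a, -, rfl⟩
        rcases eq_or_ne a k with rfl | hak
        exacts [⟨x, hk', hf⟩, ⟨a, hak, rfl⟩]
      · rintro _ ⟨a, -, rfl⟩
        rcases eq_or_ne a x with rfl | hax
        exacts [⟨k, hk'.symm, hf.symm⟩, ⟨a, hax, rfl⟩]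

theorem odd_ncard_isDoor_iff (hcard : Nat.card α = Nat.card β) :
    Odd {k | IsDoor f b k}.ncard ↔ f.Bijective := by
  constructor
  · contrapose
    intro hf
    rw [Nat.not_odd_iff_even]
    rcases Set.eq_empty_or_nonempty {k | IsDoor f b k} with hempty | ⟨k, hk⟩
    · simp [hempty]
    have hsurj : ∀ y ≠ b, ∃ a ≠ k, f a = y := fun y hy ↦ hk.ge hy
    have hfk : f k ≠ b := by
      intro hfk
      refine hf (Function.Surjective.bijective_of_nat_card_le (fun y ↦ ?_) hcard.le)
      rcases eq_or_ne y b with rfl | hy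
      exacts [⟨k, hfk⟩, (hsurj y hy).imp fun _ ↦ And.right]
    obtain ⟨k', hk', hf'⟩ := hsurj _ hfk
    rw [hk.setOf_isDoor_eq hcard hk' hf', Set.ncard_pair hk'.symm]
    exact even_two
  · intro hf
    obtain ⟨a, rfl⟩ := hf.surjective b
    simp [isDoor_iff_of_bijective hf, hf.injective.eq_iff]

end Doors

/-- A simplex of Kuhn's triangulation of the cubical grid with `m + 1` cells in each of the `N`
directions: the lowest corner `q.2` of a cell together with the order `q.1` in which the
coordinates are increased by one on the way to the highest corner, coordinate `i` being increased
at step `q.1 i`. -/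
abbrev KuhnSimplex (N m : ℕ) : Type := Perm (Fin N) × (Fin N → Fin (m + 1))

namespace KuhnSimplex

variable {N n m : ℕ} {κ : Type*}

/-- The `j`-th vertex of a Kuhn simplex: the coordinates with position before `j` are increased. -/
def vertex (q : KuhnSimplex N m) (j : Fin (N + 1)) (i : Fin N) : Fin (m + 2) :=
  if (q.1 i).castSucc < j then (q.2 i).succ else (q.2 i).castSucc

theorem vertex_swap_mul {q : KuhnSimplex (n + 1) m} {j : Fin n} {k : Fin (n + 2)}
    (hk : k ≠ j.castSucc.succ) :
    vertex (swap j.castSucc j.succ * q.1, q.2) k = q.vertex k := by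
  funext i
  have hlt : (swap j.castSucc j.succ (q.1 i)).castSucc < k ↔ (q.1 i).castSucc < k := by
    rw [swap_apply_def]
    split_ifs <;> grind
  simp only [vertex, Perm.mul_apply, hlt]

theorem even_ncard_isDoor_inner (l : (Fin (n + 1) → Fin (m + 2)) → κ) (b : κ) (j : Fin n) :
    Even {q : KuhnSimplex (n + 1) m | IsDoor (l ∘ q.vertex) b j.castSucc.succ}.ncard := by
  refine even_ncard_of_involution (fun q ↦ (swap j.castSucc j.succ * q.1, q.2)) ?_ ?_ ?_
  · intro q hq
    refine Eq.trans (Set.image_congr fun k hk ↦ ?_) hq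
    exact congrArg l (vertex_swap_mul hk)
  · intro q _ h
    have hswap := swap_eq_one_iff.1 (mul_eq_right.1 (congrArg Prod.fst h))
    exact (Fin.castSucc_lt_succ).ne hswap
  · simp [← mul_assoc]

/-- Translates the facet opposite to the last vertex to the facet opposite to the vertex `0`: the
last coordinate to be increased is decreased beforehand and becomes the first. Subtraction in
`Fin (m + 1)` being cyclic, the result is adjacent to the original simplex only as long as it does
not leave the grid. -/
def shift (n m : ℕ) : KuhnSimplex (n + 1) m ≃ KuhnSimplex (n + 1) m :=
  prodShear (Equiv.mulLeft (finRotate (n + 1)))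
    fun τ ↦ Equiv.subRight (Pi.single (τ.symm (Fin.last n)) 1)

theorem vertex_shift_succ {q : KuhnSimplex (n + 1) m} (hq : q.2 (q.1.symm (Fin.last n)) ≠ 0)
    (j : Fin (n + 1)) : (shift n m q).vertex j.succ = q.vertex j.castSucc := by
  obtain ⟨τ, c⟩ := q
  funext i
  rcases eq_or_ne (τ i) (Fin.last n) with hi | hi
  · obtain rfl : i = τ.symm (Fin.last n) := (τ.symm_apply_eq.2 hi.symm).symm
    have hsucc : (c (τ.symm (Fin.last n)) - 1).succ = (c (τ.symm (Fin.last n))).castSucc := by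
      have := Fin.coe_sub_one (c (τ.symm (Fin.last n)))
      grind
    simp [shift, vertex, prodShear, hsucc, (Fin.le_last j).not_gt]
  · have hi' : i ≠ τ.symm (Fin.last n) := fun h ↦ hi (by simp [h])
    have hrot : τ i + 1 ≤ j ↔ τ i < j := by
      have := Fin.val_add_one (τ i)
      grind
    simp [shift, vertex, prodShear, hi', hrot]

theorem ncard_isDoor_last {l : (Fin (n + 1) → Fin (m + 2)) → Fin (n + 2)}
    (hbot : ∀ v i, v i = 0 → l v ≠ i.succ) :
    {q : KuhnSimplex (n + 1) m | IsDoor (l ∘ q.vertex) 0 (Fin.last _)}.ncard =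
      {q : KuhnSimplex (n + 1) m |
        IsDoor (l ∘ q.vertex) 0 0 ∧ q.2 (q.1.symm 0) ≠ Fin.last m}.ncard := by
  have hbase (q : KuhnSimplex (n + 1) m) :
      (shift n m q).2 ((shift n m q).1.symm 0) = q.2 (q.1.symm (Fin.last n)) - 1 := by
    have hrot : (finRotate (n + 1)).symm 0 = Fin.last n :=
      (finRotate (n + 1)).symm_apply_eq.2 finRotate_last.symm
    have : (shift n m q).1.symm 0 = q.1.symm (Fin.last n) := congrArg q.1.symm hrot
    rw [this]
    simp [shift, prodShear]
  refine Eq.trans (congrArg Set.ncard ?_)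
    (Set.ncard_preimage_of_injective_subset_range (shift n m).injective (by simp))
  ext q
  simp only [Set.mem_ofPred_eq, Set.preimage_ofPred_eq, hbase, isDoor_zero_iff, isDoor_last_iff]
  by_cases hq : q.2 (q.1.symm (Fin.last n)) = 0
  · have hno : Set.range ((l ∘ q.vertex) ∘ Fin.castSucc) ≠ {0}ᶜ := by
      intro h
      obtain ⟨j, hj⟩ := h.ge (Fin.succ_ne_zero (q.1.symm (Fin.last n)))
      refine hbot _ _ ?_ hj
      simp [vertex, hq, (Fin.le_last j).not_gt]
    have hneg : (-1 : Fin (m + 1)) = Fin.last m := neg_eq_of_add_eq_zero_left (Fin.last_add_one m)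
    simp [hno, hq, hneg]
  · have hlast : q.2 (q.1.symm (Fin.last n)) - 1 ≠ Fin.last m := by
      have := Fin.coe_sub_one (q.2 (q.1.symm (Fin.last n)))
      grind
    have hvertex : (shift n m q).vertex ∘ Fin.succ = q.vertex ∘ Fin.castSucc :=
      funext (vertex_shift_succ hq)
    simp [hlast, Function.comp_assoc, hvertex]

/-- Extends a Kuhn simplex of the face where the new coordinate `0` is maximal by the vertex below
it; the new vertex comes first. -/
def cone (q : KuhnSimplex n m) : KuhnSimplex (n + 1) m :=
  (Perm.decomposeFin.symm (0, q.1), Fin.cons (Fin.last m) q.2)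

theorem cone_injective : (cone : KuhnSimplex n m → KuhnSimplex (n + 1) m).Injective := by
  intro q q' h
  obtain ⟨hτ, hc⟩ := Prod.ext_iff.1 h
  exact Prod.ext (Prod.ext_iff.1 (Perm.decomposeFin.symm.injective hτ)).2
    (Fin.cons_injective2 (α := fun _ ↦ Fin (m + 1)) hc).2

theorem mem_range_cone {q : KuhnSimplex (n + 1) m} (hτ : q.1 0 = 0) (hc : q.2 0 = Fin.last m) :
    q ∈ Set.range cone := by
  obtain ⟨τ, c⟩ := q
  obtain ⟨⟨i, σ⟩, rfl⟩ := Perm.decomposeFin.symm.surjective τ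
  obtain rfl : i = 0 := by simpa using hτ
  exact ⟨(σ, Fin.tail c),
    Prod.ext rfl ((congrArg (Fin.cons · _) hc.symm).trans (Fin.cons_self_tail c))⟩

theorem vertex_cone_succ (q : KuhnSimplex n m) (j : Fin (n + 1)) :
    q.cone.vertex j.succ = Fin.cons (Fin.last (m + 1)) (q.vertex j) := by
  funext i
  cases i using Fin.cases <;> simp [cone, vertex]

theorem ncard_isDoor_boundary {l : (Fin (n + 1) → Fin (m + 2)) → Fin (n + 2)}
    (htop : ∀ v i, v i = Fin.last (m + 1) → i.castSucc < l v)
    {l' : (Fin n → Fin (m + 2)) → Fin (n + 1)}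
    (hl' : ∀ v, l (Fin.cons (Fin.last (m + 1)) v) = (l' v).succ) :
    {q : KuhnSimplex (n + 1) m |
        IsDoor (l ∘ q.vertex) 0 0 ∧ q.2 (q.1.symm 0) = Fin.last m}.ncard =
      {q : KuhnSimplex n m | (l' ∘ q.vertex).Bijective}.ncard := by
  have hcone (q : KuhnSimplex n m) :
      IsDoor (l ∘ q.cone.vertex) 0 0 ↔ (l' ∘ q.vertex).Bijective := by
    have hcomp : (l ∘ q.cone.vertex) ∘ Fin.succ = Fin.succ ∘ l' ∘ q.vertex := by
      funext j
      simp [vertex_cone_succ, hl']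
    rw [isDoor_zero_iff, hcomp, Set.range_comp, ← Fin.range_succ,
      ← Set.image_univ (f := Fin.succ), (Fin.succ_injective _).image_injective.eq_iff,
      Set.range_eq_univ, Finite.surjective_iff_bijective]
  refine Eq.trans (congrArg Set.ncard ?_) (Set.ncard_image_of_injective _ cone_injective)
  ext q
  constructor
  · rintro ⟨hdoor, hq⟩
    obtain ⟨j, hj⟩ := (isDoor_zero_iff.1 hdoor).ge (Fin.succ_ne_zero 0)
    have hτ : q.1.symm 0 = 0 := by
      have hlt : (q.1.symm 0).castSucc < ((l ∘ q.vertex) ∘ Fin.succ) j :=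
        htop _ _ (by simp [vertex, hq])
      rw [hj, Fin.castSucc_lt_succ_iff] at hlt
      exact Fin.le_zero_iff.1 hlt
    obtain ⟨q, rfl⟩ := mem_range_cone (q.1.symm_apply_eq.1 hτ).symm (hτ ▸ hq)
    exact ⟨q, (hcone q).1 hdoor, rfl⟩
  · rintro ⟨q, hq, rfl⟩
    have hτ : q.cone.1.symm 0 = 0 := by simp [cone, symm_apply_eq]
    exact ⟨(hcone q).2 hq, congrArg q.cone.2 hτ⟩

theorem odd_ncard_bijective_iff (l : (Fin N → Fin (m + 2)) → Fin (N + 1)) (b : Fin (N + 1)) :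
    Odd {q : KuhnSimplex N m | (l ∘ q.vertex).Bijective}.ncard ↔
      Odd (∑ k, {q : KuhnSimplex N m | IsDoor (l ∘ q.vertex) b k}.ncard) := by
  rw [sum_ncard_comm, Finset.odd_sum_iff_odd_card_odd]
  simp [odd_ncard_isDoor_iff, Set.ncard_eq_toFinset_card']

theorem odd_ncard_bijective {N : ℕ} (l : (Fin N → Fin (m + 2)) → Fin (N + 1))
    (hbot : ∀ v i, v i = 0 → l v ≠ i.succ)
    (htop : ∀ v i, v i = Fin.last (m + 1) → i.castSucc < l v) :
    Odd {q : KuhnSimplex N m | (l ∘ q.vertex).Bijective}.ncard := by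
  induction N with
  | zero =>
    have hbij (f : Fin 1 → Fin 1) : f.Bijective :=
      ⟨Function.injective_of_subsingleton f, Function.surjective_to_subsingleton f⟩
    have huniv : {q : KuhnSimplex 0 m | (l ∘ q.vertex).Bijective} = Set.univ :=
      Set.eq_univ_of_forall fun q ↦ hbij _
    rw [huniv, Set.ncard_univ]
    simp
  | succ n ih =>
    have hpos (v : Fin n → Fin (m + 2)) : l (Fin.cons (Fin.last (m + 1)) v) ≠ 0 :=
      Fin.ne_zero_of_lt (htop _ 0 (Fin.cons_zero ..))
    choose l' hl' using fun v ↦ Fin.exists_succ_eq.2 (hpos v)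
    have hbot' (v : Fin n → Fin (m + 2)) (i : Fin n) (hv : v i = 0) : l' v ≠ i.succ := fun h ↦
      hbot (Fin.cons (Fin.last (m + 1)) v) i.succ (by simpa using hv) (by rw [← hl', h])
    have htop' (v : Fin n → Fin (m + 2)) (i : Fin n) (hv : v i = Fin.last (m + 1)) :
        i.castSucc < l' v := by
      have := htop (Fin.cons (Fin.last (m + 1)) v) i.succ (by simpa using hv)
      rwa [← hl', ← Fin.succ_castSucc, Fin.succ_lt_succ_iff] at this
    have hfirst : {q : KuhnSimplex (n + 1) m | IsDoor (l ∘ q.vertex) 0 0}.ncard =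
        {q : KuhnSimplex n m | (l' ∘ q.vertex).Bijective}.ncard +
          {q : KuhnSimplex (n + 1) m | IsDoor (l ∘ q.vertex) 0 (Fin.last _)}.ncard := by
      rw [← ncard_isDoor_boundary htop fun v ↦ (hl' v).symm, ncard_isDoor_last hbot]
      exact (Set.ncard_inter_add_ncard_sdiff_eq_ncard _
        {q : KuhnSimplex (n + 1) m | q.2 (q.1.symm 0) = Fin.last m}).symm
    have hinner : Even (∑ j : Fin n, {q : KuhnSimplex (n + 1) m |
        IsDoor (l ∘ q.vertex) 0 j.castSucc.succ}.ncard) :=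
      Finset.even_sum _ fun j _ ↦ even_ncard_isDoor_inner l 0 j
    have hdoors : Odd (∑ k, {q : KuhnSimplex (n + 1) m | IsDoor (l ∘ q.vertex) 0 k}.ncard) := by
      rw [Fin.sum_univ_succ, Fin.sum_univ_castSucc, hfirst, Fin.succ_last]
      have := ih l' hbot' htop'
      grind
    rwa [odd_ncard_bijective_iff l 0]

theorem exists_injective_comp_vertex (c : (Fin N → Fin (m + 2)) → κ)
    (hc : ∀ i v w, v i = 0 → w i = Fin.last (m + 1) → c v ≠ c w) :
    ∃ q : KuhnSimplex N m, (c ∘ q.vertex).Injective := by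
  -- A colour occurring on an upper face occurs on no lower face in the same direction, so labelling
  -- it past the last such direction gives a Sperner labelling.
  choose L hlt hmem using fun k ↦ exists_castSucc_lt_and_eq_succ_imp
    fun i ↦ ∃ v, c v = k ∧ v i = Fin.last (m + 1)
  obtain ⟨q, hq⟩ := Set.nonempty_of_ncard_ne_zero (odd_ncard_bijective (L ∘ c)
    (fun v i hv h ↦ let ⟨w, hw, hwi⟩ := hmem _ i h; hc i v w hv hwi hw.symm)
    fun v i hv ↦ hlt _ i ⟨v, rfl, hv⟩).pos.ne'
  exact ⟨q, Function.Injective.of_comp (f := L) hq.injective⟩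

end KuhnSimplex
end Sperner

section CoveringDimension

open Metric unitInterval

namespace KuhnSimplex

theorem abs_vertex_sub_vertex_le {N m : ℕ} (q : KuhnSimplex N m) (j k : Fin (N + 1)) (i : Fin N) :
    |(q.vertex j i : ℝ) - q.vertex k i| ≤ 1 := by
  simp only [vertex]
  split_ifs <;> simp

end KuhnSimplex

/-- The vertex `v` of the cubical grid with `m + 1` cells in each direction, as a point of the unit
cube. -/
noncomputable def gridPoint {N m : ℕ} (v : Fin N → Fin (m + 2)) : Fin N → I :=
  fun i ↦ ⟨(v i : ℝ) / (m + 1), by positivity,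
    div_le_one_of_le₀ (mod_cast Nat.lt_succ_iff.1 (v i).2) (by positivity)⟩

theorem gridPoint_eq_zero {N m : ℕ} {v : Fin N → Fin (m + 2)} {i : Fin N} (h : v i = 0) :
    gridPoint v i = 0 := by
  simp [gridPoint, h]

theorem gridPoint_eq_one {N m : ℕ} {v : Fin N → Fin (m + 2)} {i : Fin N}
    (h : v i = Fin.last (m + 1)) : gridPoint v i = 1 := by
  ext
  simp [gridPoint, h, Nat.cast_add_one_ne_zero m]

theorem dist_gridPoint_vertex_le {N m : ℕ} (q : KuhnSimplex N m) (j k : Fin (N + 1)) :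
    dist (gridPoint (q.vertex j)) (gridPoint (q.vertex k)) ≤ 1 / (m + 1) := by
  refine (dist_pi_le_iff (by positivity)).2 fun i ↦ ?_
  rw [Subtype.dist_eq, Real.dist_eq]
  simp only [gridPoint]
  rw [← sub_div, abs_div, abs_of_pos (by positivity : (0 : ℝ) < m + 1)]
  gcongr
  exact q.abs_vertex_sub_vertex_le j k i

theorem exists_le_encard_of_cover_cube {N : ℕ} {W : Set (Set (Fin N → I))}
    (hW : ∀ w ∈ W, IsOpen w) (hcover : ⋃₀ W = Set.univ)
    (hface : ∀ w ∈ W, ∀ i, ∀ x ∈ w, ∀ y ∈ w, x i = 0 → y i ≠ 1) :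
    ∃ x, (N : ℕ∞) + 1 ≤ {w ∈ W | x ∈ w}.encard := by
  obtain ⟨δ, hδ, hball⟩ := lebesgue_number_lemma_of_metric_sUnion isCompact_univ hW hcover.ge
  choose c hcW hc using fun x ↦ hball x (Set.mem_univ x)
  have hmem (x) : x ∈ c x := hc x (mem_ball_self hδ)
  obtain ⟨m, hm⟩ := exists_nat_one_div_lt hδ
  obtain ⟨q, hq⟩ := KuhnSimplex.exists_injective_comp_vertex (m := m) (c ∘ gridPoint)
    fun i v w hv hw (h : c (gridPoint v) = c (gridPoint w)) ↦
      hface _ (hcW (gridPoint v)) i _ (hmem _) _ (h ▸ hmem _)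
        (gridPoint_eq_zero hv) (gridPoint_eq_one hw)
  refine ⟨gridPoint (q.vertex 0), ?_⟩
  calc (N : ℕ∞) + 1 = (Set.range ((c ∘ gridPoint) ∘ q.vertex)).encard := by
        rw [← Set.image_univ, hq.encard_image]
        simp
    _ ≤ {w ∈ W | gridPoint (q.vertex 0) ∈ w}.encard := by
        refine Set.encard_le_encard (Set.range_subset_iff.2 fun j ↦ ⟨hcW _, hc _ ?_⟩)
        exact mem_ball.2 ((dist_gridPoint_vertex_le q 0 j).trans_lt hm)

theorem not_covDimLE_cube (n : ℕ) : ¬ CovDimLE (Fin (n + 1) → I) n := by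
  intro hdim
  obtain ⟨V, hVo, hVcover, hVball, hVn⟩ := hdim (Set.range fun x ↦ ball x (1 / 2))
    (Set.forall_mem_range.2 fun x ↦ isOpen_ball)
    (Set.eq_univ_of_forall fun x ↦ ⟨_, ⟨x, rfl⟩, mem_ball_self (by norm_num)⟩)
  have hface : ∀ w ∈ V, ∀ i, ∀ x ∈ w, ∀ y ∈ w, x i = 0 → y i ≠ 1 := by
    intro w hw i x hx y hy hxi hyi
    obtain ⟨_, ⟨z, rfl⟩, hwz⟩ := hVball w hw
    have hxy : dist x y < 1 := by
      linarith [dist_triangle_right x y z, mem_ball.1 (hwz hx), mem_ball.1 (hwz hy)]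
    have hi : dist (x i) (y i) = 1 := by simp [hxi, hyi, Subtype.dist_eq]
    linarith [dist_le_pi_dist x y i]
  obtain ⟨x, hx⟩ := exists_le_encard_of_cover_cube hVo hVcover hface
  have : n + 1 + 1 ≤ n + 1 := mod_cast hx.trans (hVn x)
  omega

theorem CovDimLE.of_isClosedEmbedding {X Y : Type*} [TopologicalSpace X] [TopologicalSpace Y]
    {n : ℕ} (hY : CovDimLE Y n) {f : X → Y} (hf : Topology.IsClosedEmbedding f) :
    CovDimLE X n := by
  intro U hU hUcover
  obtain ⟨V, hVo, hVcover, hVref, hVn⟩ :=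
    hY {u | IsOpen u ∧ ((f ⁻¹' u).Nonempty → ∃ w ∈ U, f ⁻¹' u ⊆ w)} (fun u hu ↦ hu.1) <| by
      refine Set.eq_univ_of_forall fun y ↦ ?_
      by_cases hy : y ∈ Set.range f
      · obtain ⟨x, rfl⟩ := hy
        obtain ⟨w, hw, hxw⟩ := hUcover.ge (Set.mem_univ x)
        obtain ⟨u, hu, rfl⟩ := hf.isOpen_iff.1 (hU w hw)
        exact ⟨u, ⟨hu, fun _ ↦ ⟨_, hw, subset_rfl⟩⟩, hxw⟩
      · refine ⟨(Set.range f)ᶜ, ⟨hf.isClosed_range.isOpen_compl, fun ⟨x, hx⟩ ↦ ?_⟩, hy⟩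
        exact (hx ⟨x, rfl⟩).elim
  refine ⟨{w ∈ (f ⁻¹' ·) '' V | w.Nonempty}, ?_, ?_, ?_, fun x ↦ ?_⟩
  · rintro _ ⟨⟨v, hv, rfl⟩, -⟩
    exact (hVo v hv).preimage hf.continuous
  · refine Set.eq_univ_of_forall fun x ↦ ?_
    obtain ⟨v, hv, hxv⟩ := hVcover.ge (Set.mem_univ (f x))
    exact ⟨f ⁻¹' v, ⟨⟨v, hv, rfl⟩, x, hxv⟩, hxv⟩
  · rintro _ ⟨⟨v, hv, rfl⟩, x, hx⟩
    obtain ⟨u, hu, hvu⟩ := hVref v hv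
    obtain ⟨w, hw, huw⟩ := hu.2 ⟨x, hvu hx⟩
    exact ⟨w, hw, (Set.preimage_mono hvu).trans huw⟩
  · have hsub : {w ∈ {w ∈ (f ⁻¹' ·) '' V | w.Nonempty} | x ∈ w} ⊆
        (f ⁻¹' ·) '' {v ∈ V | f x ∈ v} := by
      rintro _ ⟨⟨⟨v, hv, rfl⟩, -⟩, hxv⟩
      exact ⟨v, ⟨hv, hxv⟩, rfl⟩
    exact (Set.encard_le_encard hsub).trans ((Set.encard_image_le _ _).trans (hVn (f x)))

end CoveringDimension

section GromovHausdorff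

open TopologicalSpace unitInterval

section PathConnected

variable {E : Type*}

theorem toGHSpace_mem_ghConnected_iff [MetricSpace E] {K : NonemptyCompacts E} :
    K.toGHSpace ∈ GHConnected ↔ IsConnected (K : Set E) := by
  obtain ⟨φ⟩ : Nonempty (K.toGHSpace.Rep ≃ᵢ K) :=
    toGHSpace_eq_toGHSpace_iff_isometryEquiv.1 (GHSpace.toGHSpace_rep _)
  rw [isConnected_iff_connectedSpace]
  exact ⟨fun h : ConnectedSpace _ ↦ φ.surjective.connectedSpace φ.continuous,
    fun _ ↦ φ.symm.surjective.connectedSpace φ.symm.continuous⟩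

variable [NormedAddCommGroup E] [NormedSpace ℝ E]

theorem joinedIn_ghConnected_toGHSpace_zero {K : NonemptyCompacts E}
    (hK : IsConnected (K : Set E)) :
    JoinedIn GHConnected ({0} : NonemptyCompacts E).toGHSpace K.toGHSpace := by
  let scaled (s : I) : NonemptyCompacts E := K.map ((s : ℝ) • ·) (by fun_prop)
  have hscaled : Continuous scaled := by
    refine Continuous.nonemptyCompacts_map' (f := fun _ : I ↦ K) (g := fun s x ↦ (s : ℝ) • x)
      continuous_const ?_
    simp only [Function.uncurry_def]
    fun_prop
  have hscaled_zero : scaled 0 = {0} := by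
    ext1
    simpa [scaled] using K.nonempty.image_const 0
  have hscaled_one : scaled 1 = K := by
    ext1
    simp [scaled]
  refine ⟨⟨⟨fun s ↦ (scaled s).toGHSpace, toGHSpace_continuous.comp hscaled⟩, ?_, ?_⟩, fun s ↦ ?_⟩
  · simp only [hscaled_zero]
  · simp only [hscaled_one]
  · exact toGHSpace_mem_ghConnected_iff.2 (hK.image _ (by fun_prop))

theorem isPathConnected_ghConnected : IsPathConnected GHConnected := by
  refine ⟨({0} : NonemptyCompacts (lp (fun _ : ℕ ↦ ℝ) ⊤)).toGHSpace,
    toGHSpace_mem_ghConnected_iff.2 isConnected_singleton, fun {p} hp ↦ ?_⟩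
  obtain ⟨K, rfl⟩ := Quotient.exists_rep p
  rw [eq_toGHSpace] at hp ⊢
  exact joinedIn_ghConnected_toGHSpace_zero (toGHSpace_mem_ghConnected_iff.1 hp)

end PathConnected

section Horned

open Set WithLp

/-- `h` is an admissible profile for a horn of height `L`: at distance `r` below the tip the horn
has width `h r`. The bound `h r ≤ r` makes all points of this cross-section lie at distance exactly
`r` from the tip. -/
def IsHornProfile (L : ℝ) (h : C(ℝ, ℝ)) : Prop := ∀ r ∈ Icc 0 L, h r ∈ Icc 0 r

/-- `1` or `-1`, distinguishing the directions of the two horns attached to a space. -/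
def hornSign (e : Bool) : ℝ := if e then 1 else -1

theorem abs_hornSign_mul (e : Bool) (a : ℝ) : |hornSign e * a| = |a| := by
  cases e <;> simp [hornSign]

theorem exists_unitInterval_mul_eq {c v : ℝ} (hc : 0 ≤ c) :
    (∃ b : I, b * c = v) ↔ v ∈ Icc 0 c := by
  constructor
  · rintro ⟨b, rfl⟩
    exact ⟨mul_nonneg b.2.1 hc, mul_le_of_le_one_left hc b.2.2⟩
  · rintro ⟨hv, hvc⟩
    exact ⟨⟨v / c, by positivity, div_le_one_of_le₀ hvc hc⟩,
      div_mul_cancel_of_imp fun h ↦ le_antisymm (h ▸ hvc) hv⟩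

variable {X : Type*} [MetricSpace X]

theorem dist_toLp_one (x x' : X) (u v u' v' : ℝ) :
    dist (toLp 1 (x, u, v)) (toLp 1 (x', u', v')) = dist x x' + max |u - u'| |v - v'| := by
  rw [prod_dist_eq_add (by simp)]
  simp [Prod.dist_eq, Real.dist_eq]

/-- The point of the horn in direction `e` over `z e` at distance `a.1 * L` below the tip and at the
fraction `a.2` of the width. -/
noncomputable def hornMap (z : Bool → X) (L : ℝ) (e : Bool) (h : C(ℝ, ℝ)) (a : I × I) :
    WithLp 1 (X × ℝ × ℝ) :=
  toLp 1 (z e, hornSign e * (L - a.1 * L), a.2 * h (a.1 * L))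

theorem continuous_uncurry_hornMap (z : Bool → X) (L : ℝ) (e : Bool) :
    Continuous (Function.uncurry (hornMap z L e)) := by
  refine (prod_continuous_toLp 1 X (ℝ × ℝ)).comp ?_
  fun_prop

theorem continuous_hornMap (z : Bool → X) (L : ℝ) (e : Bool) (h : C(ℝ, ℝ)) :
    Continuous (hornMap z L e h) :=
  (continuous_uncurry_hornMap z L e).comp (by fun_prop : Continuous fun a ↦ (h, a))

theorem continuous_toLp_base : Continuous fun x : X ↦ toLp 1 (x, (0 : ℝ), (0 : ℝ)) :=
  (prod_continuous_toLp 1 X (ℝ × ℝ)).comp (by fun_prop)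

/-- The horn in direction `e` with profile `h`. -/
noncomputable def horn (z : Bool → X) (L : ℝ) (e : Bool) (h : C(ℝ, ℝ)) :
    NonemptyCompacts (WithLp 1 (X × ℝ × ℝ)) :=
  (⊤ : NonemptyCompacts (I × I)).map (hornMap z L e h) (continuous_hornMap z L e h)

theorem continuous_horn (z : Bool → X) (L : ℝ) (e : Bool) : Continuous (horn z L e) :=
  Continuous.nonemptyCompacts_map' (f := fun _ ↦ (⊤ : NonemptyCompacts (I × I)))
    (g := hornMap z L e) continuous_const (continuous_uncurry_hornMap z L e)

theorem mem_horn {z : Bool → X} {L : ℝ} {e : Bool} {h : C(ℝ, ℝ)} (hL : 0 ≤ L)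
    (hh : IsHornProfile L h) {q : WithLp 1 (X × ℝ × ℝ)} :
    q ∈ horn z L e h ↔
      ∃ r ∈ Icc 0 L, ∃ v ∈ Icc 0 (h r), toLp 1 (z e, hornSign e * (L - r), v) = q := by
  constructor
  · rintro ⟨⟨a, b⟩, -, rfl⟩
    have ha := (exists_unitInterval_mul_eq hL).1 ⟨a, rfl⟩
    exact ⟨a * L, ha, b * h (a * L), (exists_unitInterval_mul_eq (hh _ ha).1).1 ⟨b, rfl⟩, rfl⟩
  · rintro ⟨r, hr, v, hv, rfl⟩
    obtain ⟨a, rfl⟩ := (exists_unitInterval_mul_eq hL).2 hr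
    obtain ⟨b, rfl⟩ := (exists_unitInterval_mul_eq (hh _ hr).1).2 hv
    exact ⟨(a, b), mem_univ _, rfl⟩

theorem base_mem_horn (z : Bool → X) (L : ℝ) (e : Bool) (h : C(ℝ, ℝ)) :
    toLp 1 (z e, 0, 0) ∈ horn z L e h :=
  ⟨(1, 0), mem_univ _, by simp [hornMap]⟩

theorem isConnected_horn (z : Bool → X) (L : ℝ) (e : Bool) (h : C(ℝ, ℝ)) :
    IsConnected (horn z L e h : Set (WithLp 1 (X × ℝ × ℝ))) :=
  isConnected_univ.image _ (continuous_hornMap z L e h).continuousOn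

/-- The tip of the horn of height `L` in direction `e` over `z e`. -/
def hornTip (z : Bool → X) (L : ℝ) (e : Bool) : WithLp 1 (X × ℝ × ℝ) :=
  toLp 1 (z e, hornSign e * L, 0)

theorem dist_hornTip_true_false {z : Bool → X} {L : ℝ} (hL : 0 ≤ L) :
    dist (hornTip z L true) (hornTip z L false) = dist (z true) (z false) + 2 * L := by
  simp [hornTip, dist_toLp_one, hornSign, ← two_mul, hL]

theorem dist_hornTip {z : Bool → X} {L r v : ℝ} {e : Bool} (hr : 0 ≤ r) (hv : v ∈ Icc 0 r) :
    dist (hornTip z L e) (toLp 1 (z e, hornSign e * (L - r), v)) = r := by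
  rw [hornTip, dist_toLp_one, ← mul_sub, sub_sub_cancel, abs_hornSign_mul]
  simp [abs_of_nonneg hr, abs_of_nonneg hv.1, hv.2]

variable [CompactSpace X] [Nonempty X]

/-- The isometric copy of `X` to which horns are attached. -/
noncomputable def hornBase (X : Type*) [MetricSpace X] [CompactSpace X] [Nonempty X] :
    NonemptyCompacts (WithLp 1 (X × ℝ × ℝ)) :=
  (⊤ : NonemptyCompacts X).map (fun x ↦ toLp 1 (x, 0, 0)) continuous_toLp_base

/-- The space `X` with a horn of height `L` and profile `h` attached at each of the points
`z true`, `z false`, the two horns pointing in opposite directions. -/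
noncomputable def horned (z : Bool → X) (L : ℝ) (h : C(ℝ, ℝ)) :
    NonemptyCompacts (WithLp 1 (X × ℝ × ℝ)) :=
  hornBase X ⊔ horn z L false h ⊔ horn z L true h

theorem mem_hornBase {q : WithLp 1 (X × ℝ × ℝ)} :
    q ∈ hornBase X ↔ ∃ x, toLp 1 (x, 0, 0) = q := by
  simp [hornBase, ← SetLike.mem_coe]

theorem toGHSpace_hornBase : (hornBase X).toGHSpace = toGHSpace X := by
  have hisom : Isometry fun x : X ↦ toLp 1 (x, (0 : ℝ), (0 : ℝ)) :=
    Isometry.of_dist_eq fun x y ↦ by simp [dist_toLp_one]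
  have hrange : range (fun x : X ↦ toLp 1 (x, (0 : ℝ), (0 : ℝ))) = hornBase X :=
    Set.ext fun _ ↦ mem_hornBase.symm
  have φ := hisom.isometryEquivOnRange
  rw [hrange] at φ
  exact Eq.symm (toGHSpace_eq_toGHSpace_iff_isometryEquiv (X := X) (Y := hornBase X) |>.2 ⟨φ⟩)

theorem continuous_horned (z : Bool → X) (L : ℝ) : Continuous (horned z L) :=
  (continuous_const.sup (continuous_horn z L false)).sup (continuous_horn z L true)

theorem isConnected_horned [ConnectedSpace X] (z : Bool → X) (L : ℝ) (h : C(ℝ, ℝ)) :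
    IsConnected (horned z L h : Set (WithLp 1 (X × ℝ × ℝ))) := by
  have hbase : IsConnected (hornBase X : Set (WithLp 1 (X × ℝ × ℝ))) :=
    isConnected_univ.image _ continuous_toLp_base.continuousOn
  have hmem (e : Bool) : toLp 1 (z e, 0, 0) ∈ hornBase X := mem_hornBase.2 ⟨_, rfl⟩
  have hfalse := IsConnected.union ⟨_, hmem false, base_mem_horn z L false h⟩ hbase
    (isConnected_horn z L false h)
  exact IsConnected.union ⟨_, Or.inl (hmem true), base_mem_horn z L true h⟩ hfalse
    (isConnected_horn z L true h)

section Profile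

variable {z : Bool → X} {L r : ℝ} {h : C(ℝ, ℝ)} {q q' : WithLp 1 (X × ℝ × ℝ)}

theorem mem_horned (hL : 0 ≤ L) (hh : IsHornProfile L h) :
    q ∈ horned z L h ↔ (∃ x, toLp 1 (x, 0, 0) = q) ∨
      ∃ e, ∃ r ∈ Icc 0 L, ∃ v ∈ Icc 0 (h r), toLp 1 (z e, hornSign e * (L - r), v) = q := by
  change (q ∈ hornBase X ∨ q ∈ horn z L false h) ∨ q ∈ horn z L true h ↔ _
  rw [mem_hornBase, mem_horn hL hh, mem_horn hL hh, or_assoc, Bool.exists_bool]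

theorem abs_add_le_of_mem_horned (hL : 0 ≤ L) (hh : IsHornProfile L h) {x : X} {u v : ℝ}
    (hq : toLp 1 (x, u, v) ∈ horned z L h) : 0 ≤ v ∧ |u| + v ≤ L := by
  rcases (mem_horned hL hh).1 hq with ⟨y, hy⟩ | ⟨e, r, hr, w, hw, hy⟩
  all_goals
    simp only [toLp.injEq, Prod.mk.injEq] at hy
    obtain ⟨-, rfl, rfl⟩ := hy
  · simpa using hL
  · rw [abs_hornSign_mul, abs_of_nonneg (sub_nonneg.2 hr.2)]
    exact ⟨hw.1, by linarith [hw.2, (hh r hr).2]⟩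

theorem dist_horned_hornBase_le (hL : 0 ≤ L) (hh : IsHornProfile L h) :
    dist (horned z L h) (hornBase X) ≤ L := by
  refine Metric.hausdorffDist_le_of_mem_dist hL (fun q hq ↦ ?_) fun q hq ↦
    ⟨q, Or.inl (Or.inl hq), by simpa using hL⟩
  obtain ⟨x, u, v⟩ := q
  obtain ⟨hv, huv⟩ := abs_add_le_of_mem_horned hL hh hq
  refine ⟨_, mem_hornBase.2 ⟨x, rfl⟩, ?_⟩
  rw [dist_toLp_one, dist_self, zero_add, sub_zero, sub_zero, abs_of_nonneg hv]
  exact max_le (by linarith) (by linarith [abs_nonneg u])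

theorem hornTip_mem_horned (hL : 0 ≤ L) (hh : IsHornProfile L h) (e : Bool) :
    hornTip z L e ∈ horned z L h :=
  (mem_horned hL hh).2 <| Or.inr
    ⟨e, 0, ⟨le_rfl, hL⟩, 0, ⟨le_rfl, (hh 0 ⟨le_rfl, hL⟩).1⟩, by simp [hornTip]⟩

theorem exists_eq_hornTip (hL : 0 < L) (hh : IsHornProfile L h) {D : ℝ}
    (hD : ∀ x y : X, dist x y ≤ D) (hq : q ∈ horned z L h) (hq' : q' ∈ horned z L h)
    (hqq' : dist q q' = D + 2 * L) : ∃ e, q = hornTip z L e := by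
  obtain ⟨x, u, v⟩ := q
  obtain ⟨x', u', v'⟩ := q'
  obtain ⟨hv, huv⟩ := abs_add_le_of_mem_horned hL.le hh hq
  obtain ⟨hv', huv'⟩ := abs_add_le_of_mem_horned hL.le hh hq'
  have hu : L ≤ |u| := by
    rw [dist_toLp_one] at hqq'
    have hmax : 2 * L ≤ max |u - u'| |v - v'| := by linarith [hD x x']
    rcases le_max_iff.1 hmax with hle | hle
    · linarith [abs_sub u u']
    · have : |v - v'| ≤ L := abs_sub_le_iff.2
        ⟨by linarith [abs_nonneg u], by linarith [abs_nonneg u']⟩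
      linarith
  rcases (mem_horned hL.le hh).1 hq with ⟨y, hy⟩ | ⟨e, r, hr, w, hw, hy⟩
  all_goals
    simp only [toLp.injEq, Prod.mk.injEq] at hy
    obtain ⟨rfl, rfl, rfl⟩ := hy
  · simp only [abs_zero] at hu
    exact absurd hL hu.not_gt
  · rw [abs_hornSign_mul, abs_of_nonneg (sub_nonneg.2 hr.2)] at hu
    obtain rfl : r = 0 := le_antisymm (by linarith) hr.1
    obtain rfl : w = 0 := le_antisymm (hw.2.trans (hh 0 hr).2) hw.1
    exact ⟨e, by simp [hornTip]⟩

theorem exists_eq_of_dist_hornTip_eq (hh : IsHornProfile L h) {e : Bool} (hr : r < L)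
    (hq : q ∈ horned z L h) (hdist : dist (hornTip z L e) q = r) :
    ∃ v ∈ Icc 0 (h r), q = toLp 1 (z e, hornSign e * (L - r), v) := by
  have hL : 0 ≤ L := (hdist ▸ dist_nonneg).trans hr.le
  have hlt {x : X} {u v : ℝ} (hx : dist (hornTip z L e) (toLp 1 (x, u, v)) = r) :
      |hornSign e * L - u| < L := by
    rw [hornTip, dist_toLp_one] at hx
    linarith [le_max_left |hornSign e * L - u| |0 - v|, dist_nonneg (x := z e) (y := x)]
  rcases (mem_horned hL hh).1 hq with ⟨x, rfl⟩ | ⟨e', r', hr', v, hv, rfl⟩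
  · have := hlt hdist
    rw [sub_zero, abs_hornSign_mul, abs_of_nonneg hL] at this
    exact absurd this (lt_irrefl L)
  obtain rfl : e' = e := by
    by_contra! hne
    have := hlt hdist
    rw [show hornSign e' = -hornSign e by cases e <;> cases e' <;> simp_all [hornSign], neg_mul,
      sub_neg_eq_add, ← mul_add, abs_hornSign_mul] at this
    linarith [le_abs_self (L + (L - r')), hr'.2]
  obtain rfl : r' = r := (dist_hornTip hr'.1 ⟨hv.1, hv.2.trans (hh r' hr').2⟩).symm.trans hdist
  exact ⟨v, hv, rfl⟩

theorem dist_le_of_dist_hornTip_eq (hh : IsHornProfile L h) {e : Bool} (hr : r < L)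
    (hq : q ∈ horned z L h) (hq' : q' ∈ horned z L h) (hqr : dist (hornTip z L e) q = r)
    (hqr' : dist (hornTip z L e) q' = r) : dist q q' ≤ h r := by
  obtain ⟨v, hv, rfl⟩ := exists_eq_of_dist_hornTip_eq hh hr hq hqr
  obtain ⟨v', hv', rfl⟩ := exists_eq_of_dist_hornTip_eq hh hr hq' hqr'
  rw [dist_toLp_one, dist_self, sub_self, abs_zero, zero_add, max_eq_right (abs_nonneg _)]
  exact abs_sub_le_iff.2 ⟨by linarith [hv.2, hv'.1], by linarith [hv.1, hv'.2]⟩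

theorem profile_le_of_isometryEquiv (hL : 0 < L)
    (hz : ∀ x y : X, dist x y ≤ dist (z true) (z false)) {h' : C(ℝ, ℝ)}
    (hh : IsHornProfile L h) (hh' : IsHornProfile L h')
    (φ : horned z L h ≃ᵢ horned z L h') (hr : r ∈ Ico 0 L) : h r ≤ h' r := by
  have hφ (p p' : horned z L h) :
      dist (φ p : WithLp 1 (X × ℝ × ℝ)) (φ p') = dist (p : WithLp 1 (X × ℝ × ℝ)) p' :=
    φ.dist_eq p p'
  let tip (e : Bool) : horned z L h := ⟨hornTip z L e, hornTip_mem_horned hL.le hh e⟩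
  obtain ⟨e, he⟩ := exists_eq_hornTip hL hh' hz (φ (tip true)).2 (φ (tip false)).2
    ((hφ _ _).trans (dist_hornTip_true_false hL.le))
  have hhr : h r ∈ Icc 0 r := hh r (Ico_subset_Icc_self hr)
  let p (v : Icc 0 (h r)) : horned z L h :=
    ⟨toLp 1 (z true, hornSign true * (L - r), v),
      (mem_horned hL.le hh).2 (Or.inr ⟨true, r, Ico_subset_Icc_self hr, v, v.2, rfl⟩)⟩
  have hp (v : Icc 0 (h r)) : dist (hornTip z L e) (φ (p v)) = r := by
    rw [← he, hφ]
    exact dist_hornTip hr.1 ⟨v.2.1, v.2.2.trans hhr.2⟩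
  let bot : Icc 0 (h r) := ⟨0, le_rfl, hhr.1⟩
  let top : Icc 0 (h r) := ⟨h r, hhr.1, le_rfl⟩
  calc h r = dist (φ (p bot) : WithLp 1 (X × ℝ × ℝ)) (φ (p top)) := by
        rw [hφ]
        simp [p, bot, top, dist_toLp_one, abs_of_nonneg hhr.1, hhr.1]
    _ ≤ h' r := dist_le_of_dist_hornTip_eq hh' hr.2 (φ _).2 (φ _).2 (hp _) (hp _)

end Profile

section Family

variable {N : ℕ} {L : ℝ}

/-- The polynomial `r * (t₀ + t₁ r + ⋯ + t_{N-1} r ^ (N - 1)) / N`, used as the profile of a horn.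
The division by `N` keeps it between `0` and `r` on `[0, 1]`. -/
noncomputable def polyProfile (t : Fin N → I) : C(ℝ, ℝ) where
  toFun r := r * ((∑ i, t i * r ^ (i : ℕ)) / N)

theorem continuous_polyProfile : Continuous (polyProfile (N := N)) :=
  ContinuousMap.continuous_of_continuous_uncurry _ (by
    simp only [Function.uncurry_def, polyProfile, ContinuousMap.coe_mk]
    fun_prop)

theorem isHornProfile_polyProfile (hL : L ≤ 1) (t : Fin N → I) :
    IsHornProfile L (polyProfile t) := by
  intro r hr
  have hterm (i : Fin N) : t i * r ^ (i : ℕ) ∈ Icc (0 : ℝ) 1 :=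
    ⟨mul_nonneg (t i).2.1 (pow_nonneg hr.1 _),
      mul_le_one₀ (t i).2.2 (pow_nonneg hr.1 _) (pow_le_one₀ hr.1 (hr.2.trans hL))⟩
  have hsum : ∑ i, t i * r ^ (i : ℕ) ≤ N := by
    simpa using Finset.sum_le_sum fun i (_ : i ∈ Finset.univ) ↦ (hterm i).2
  exact ⟨mul_nonneg hr.1 (div_nonneg (Finset.sum_nonneg fun i _ ↦ (hterm i).1) (by positivity)),
    mul_le_of_le_one_right hr.1 (div_le_one_of_le₀ hsum (by positivity))⟩

theorem eq_of_eqOn_polyProfile (hL : 0 < L) {t s : Fin N → I}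
    (h : EqOn (polyProfile t) (polyProfile s) (Ioo 0 L)) : t = s := by
  funext i
  have hN : (N : ℝ) ≠ 0 := Nat.cast_ne_zero.2 i.pos.ne'
  have heval (t : Fin N → I) (r : ℝ) :
      (Polynomial.ofFn N fun i ↦ (t i : ℝ)).eval r = ∑ i, t i * r ^ (i : ℕ) := by
    simp [Polynomial.ofFn_eq_sum_monomial, Polynomial.eval_finsetSum]
  have hpoly : Polynomial.ofFn N (fun i ↦ (t i : ℝ)) = Polynomial.ofFn N fun i ↦ (s i : ℝ) := by
    refine Polynomial.eq_of_infinite_eval_eq _ _ ((Ioo_infinite hL).mono fun r hr ↦ ?_)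
    have := mul_left_cancel₀ hr.1.ne' (h hr)
    simpa only [mem_ofPred_eq, heval] using (div_left_inj' hN).1 this
  exact Subtype.ext (congrFun (Polynomial.injective_ofFn N hpoly) i)

theorem exists_cube_near (p : GHConnected) {ε : ℝ} (hε : 0 < ε) (N : ℕ) :
    ∃ Φ : (Fin N → I) → GHConnected,
      Continuous Φ ∧ Function.Injective Φ ∧ ∀ t, dist (Φ t) p < ε := by
  have : ConnectedSpace p.1.Rep := p.2
  obtain ⟨⟨a, b⟩, -, hab⟩ := isCompact_univ.exists_isMaxOn univ_nonempty
    (continuous_dist (α := p.1.Rep)).continuousOn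
  let z (e : Bool) : p.1.Rep := if e then a else b
  have hz (x y : p.1.Rep) : dist x y ≤ dist (z true) (z false) := hab (mem_univ (x, y))
  obtain ⟨L, hL, hLε⟩ := exists_between (lt_min one_pos hε)
  have hprofile (t : Fin N → I) := isHornProfile_polyProfile (hLε.trans_le (min_le_left _ _)).le t
  refine ⟨fun t ↦ ⟨(horned z L (polyProfile t)).toGHSpace,
    toGHSpace_mem_ghConnected_iff.2 (isConnected_horned z L _)⟩, ?_, ?_, ?_⟩
  · exact (toGHSpace_continuous.comp
      ((continuous_horned z L).comp continuous_polyProfile)).subtype_mk _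
  · intro t s hts
    obtain ⟨φ⟩ := toGHSpace_eq_toGHSpace_iff_isometryEquiv.1 (congrArg Subtype.val hts)
    exact eq_of_eqOn_polyProfile hL fun r hr ↦ le_antisymm
      (profile_le_of_isometryEquiv hL hz (hprofile t) (hprofile s) φ ⟨hr.1.le, hr.2⟩)
      (profile_le_of_isometryEquiv hL hz (hprofile s) (hprofile t) φ.symm ⟨hr.1.le, hr.2⟩)
  · intro t
    calc dist (horned z L (polyProfile t)).toGHSpace p.1
        = dist (horned z L (polyProfile t)).toGHSpace (hornBase p.1.Rep).toGHSpace := by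
          rw [toGHSpace_hornBase, GHSpace.toGHSpace_rep]
      _ ≤ dist (horned z L (polyProfile t)) (hornBase p.1.Rep) :=
          ghDist_le_nonemptyCompacts_dist _ _
      _ ≤ L := dist_horned_hornBase_le hL.le (hprofile t)
      _ < ε := hLε.trans_le (min_le_right _ _)

end Family

end Horned

end GromovHausdorff

/-- The set `𝒞` of all compact connected metric spaces is
path-connected as a subspace of the Gromov–Hausdorff space, and every nonempty
open subset of `𝒞` has infinite covering dimension. -/
theorem statement4 :
    PathConnectedSpace ↥GHConnected ∧
    ∀ U : Set ↥GHConnected, IsOpen U → U.Nonempty →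
      ¬ ∃ n : ℕ, CovDimLE ↥U n := by
  refine ⟨isPathConnected_iff_pathConnectedSpace.1 isPathConnected_ghConnected, ?_⟩
  rintro U hU ⟨p, hpU⟩ ⟨n, hn⟩
  obtain ⟨ε, hε, hball⟩ := Metric.isOpen_iff.1 hU p hpU
  obtain ⟨Φ, hcont, hinj, hdist⟩ := exists_cube_near p hε (n + 1)
  have hΦU (t) : Φ t ∈ U := hball (hdist t)
  have hembedding : Topology.IsClosedEmbedding (Set.codRestrict Φ U hΦU) :=
    (hcont.codRestrict hΦU).isClosedEmbedding (hinj.codRestrict hΦU)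
  exact not_covDimLE_cube n (hn.of_isClosedEmbedding hembedding)
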